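/- arXiv:2408.04122 — 2 statements merged into one kernel-verified Lean document; each statement's English description precedes it below -/
import Mathlib

section
/- Let t > 0 and s, w ∈ ℝ, and set ρ := t·(s + 1 − w). Define Φ : ℝ → ℝ by Φ(β) = (ρ − 1)·exp(t·(β − w)) + 1. Then for every β ≥ w one has Φ(β) = t·( s + ∫_w^β Φ(u) du + 1 − β ). In particular, for every β ≥ w at which the denominator is positive, the ratio Φ(β) / ( s + ∫_w^β Φ(u) du + 1 − β ) equals t. -/
/-! The threshold function solves the initial value problem `Φ' = t (Φ - 1)`, `Φ w = ρ`. Integrating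
the equation from `w` to `β` gives `Φ β = ρ + t (∫ Φ - (β - w))`, and `ρ = t (s + 1 - w)` is the
initial value for which the right-hand side is `t (s + ∫ Φ + 1 - β)`. -/

theorem eq_add_smul_integral_sub_of_hasDerivAt {E : Type*} [NormedAddCommGroup E] [NormedSpace ℝ E]
    [CompleteSpace E] {f : ℝ → E} {t a b : ℝ} {c : E}
    (hf : ∀ x ∈ Set.uIcc a b, HasDerivAt f (t • (f x - c)) x) :
    f b = f a + t • ((∫ x in a..b, f x) - (b - a) • c) := by
  have hcont : ContinuousOn f (Set.uIcc a b) := HasDerivAt.continuousOn hf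
  have hint : IntervalIntegrable (fun x ↦ t • (f x - c)) MeasureTheory.volume a b :=
    ((hcont.sub continuousOn_const).const_smul t).intervalIntegrable
  calc f b = f a + ∫ x in a..b, t • (f x - c) := by
        rw [intervalIntegral.integral_eq_sub_of_hasDerivAt hf hint, add_sub_cancel]
    _ = f a + t • ((∫ x in a..b, f x) - (b - a) • c) := by
        rw [intervalIntegral.integral_smul, intervalIntegral.integral_sub
          hcont.intervalIntegrable intervalIntegrable_const, intervalIntegral.integral_const]

theorem hasDerivAt_const_mul_exp_mul_sub_add_const (k t w c x : ℝ) :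
    HasDerivAt (fun y ↦ k * Real.exp (t * (y - w)) + c) (t * (k * Real.exp (t * (x - w)))) x := by
  have hexponent : HasDerivAt (fun y ↦ t * (y - w)) t x := by
    simpa only [mul_one, id_eq] using ((hasDerivAt_id x).sub_const w).const_mul t
  exact ((hexponent.exp.const_mul k).add_const c).congr_deriv (by ring)

theorem stmt_0_general (t s w ρ : ℝ) (hρ : ρ = t * (s + 1 - w))
    (Φ : ℝ → ℝ) (hΦ : ∀ β, Φ β = (ρ - 1) * Real.exp (t * (β - w)) + 1) :
    (∀ β, Φ β = t * (s + (∫ u in w..β, Φ u) + 1 - β)) ∧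
    (∀ β, s + (∫ u in w..β, Φ u) + 1 - β ≠ 0 →
      Φ β / (s + (∫ u in w..β, Φ u) + 1 - β) = t) := by
  have hderiv (β : ℝ) : HasDerivAt Φ (t • (Φ β - 1)) β := by
    rw [hΦ β, add_sub_cancel_right, smul_eq_mul, funext hΦ]
    exact hasDerivAt_const_mul_exp_mul_sub_add_const (ρ - 1) t w 1 β
  have hinit : Φ w = ρ := by simp [hΦ w]
  have hidentity (β : ℝ) : Φ β = t * (s + (∫ u in w..β, Φ u) + 1 - β) := by
    calc Φ β = Φ w + t • ((∫ u in w..β, Φ u) - (β - w) • 1) :=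
          eq_add_smul_integral_sub_of_hasDerivAt fun x _ ↦ hderiv x
      _ = t * (s + 1 - w) + t * ((∫ u in w..β, Φ u) - (β - w)) := by
          rw [hinit, hρ, smul_eq_mul, smul_eq_mul, mul_one]
      _ = t * (s + (∫ u in w..β, Φ u) + 1 - β) := by ring
  exact ⟨hidentity, fun β hne ↦ (div_eq_iff hne).mpr (hidentity β)⟩

/-- The exponential threshold function satisfies the profile constraint [β] with equality. -/
theorem stmt_0 (t s w : ℝ) (ht : 0 < t)
    (ρ : ℝ) (hρ : ρ = t * (s + 1 - w))
    (Φ : ℝ → ℝ) (hΦ : ∀ β, Φ β = (ρ - 1) * Real.exp (t * (β - w)) + 1) :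
    (∀ β, w ≤ β → Φ β = t * (s + (∫ u in w..β, Φ u) + 1 - β)) ∧
    (∀ β, w ≤ β → 0 < s + (∫ u in w..β, Φ u) + 1 - β →
      Φ β / (s + (∫ u in w..β, Φ u) + 1 - β) = t) := by
  obtain ⟨hidentity, hratio⟩ := stmt_0_general t s w ρ hρ Φ hΦ
  exact ⟨fun β _ ↦ hidentity β, fun β _ hpos ↦ hratio β hpos.ne'⟩
end

section
/- Let r > 0, p ∈ ℝ, and s, w₀, w ∈ ℝ, and define Φ(β) = ( r·( s + 1 − p·w₀ + w·(p − 1) ) − 1 )·exp( r·(β − w) ) + 1. Then for every β ≥ w one has Φ(β) = r·( s + p·(w − w₀) + ∫_w^β Φ(u) du + 1 − β ). -/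
/-! The threshold `Φ` solves the affine differential equation `Φ' = r (Φ - 1)`. Integrating it from
`w` to `β` gives `Φ β = Φ w + r (∫ Φ - (β - w))`, and the constant in front of the exponential is
the one for which `Φ w = r (s + p (w - w0) + 1 - w)`, the constraint at `β = w`. -/

section AffineODE

variable {E : Type*} [NormedAddCommGroup E] [NormedSpace ℝ E]

theorem sub_eq_smul_integral_sub_of_hasDerivAt [CompleteSpace E] {f : ℝ → E} {r a b : ℝ} {c : E}
    (hf : ∀ x ∈ Set.uIcc a b, HasDerivAt f (r • (f x - c)) x) :
    f b - f a = r • ((∫ x in a..b, f x) - (b - a) • c) := by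
  have hf_int : IntervalIntegrable f MeasureTheory.volume a b :=
    (HasDerivAt.continuousOn hf).intervalIntegrable
  have hc_int : IntervalIntegrable (fun _ ↦ c) MeasureTheory.volume a b :=
    intervalIntegrable_const
  calc
    f b - f a = ∫ x in a..b, r • (f x - c) :=
      (intervalIntegral.integral_eq_sub_of_hasDerivAt hf ((hf_int.sub hc_int).smul r)).symm
    _ = r • ((∫ x in a..b, f x) - (b - a) • c) := by
      rw [intervalIntegral.integral_smul, intervalIntegral.integral_sub hf_int hc_int,
        intervalIntegral.integral_const]

theorem hasDerivAt_exp_mul_sub_smul_add (r t₀ : ℝ) (v c : E) (t : ℝ) :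
    HasDerivAt (fun u ↦ Real.exp (r * (u - t₀)) • v + c)
      (r • (Real.exp (r * (t - t₀)) • v + c - c)) t := by
  have h_exponent : HasDerivAt (fun u ↦ r * (u - t₀)) r t := by
    simpa only [mul_one, id_eq] using ((hasDerivAt_id t).sub_const t₀).const_mul r
  rw [add_sub_cancel_right, smul_smul, mul_comm r]
  exact (h_exponent.exp.smul_const v).add_const c

end AffineODE

theorem stmt_8_general (r p s w0 w : ℝ) (Φ : ℝ → ℝ)
    (hΦ : ∀ β, Φ β = (r * (s + 1 - p * w0 + w * (p - 1)) - 1) * Real.exp (r * (β - w)) + 1)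
    (β : ℝ) :
    Φ β = r * (s + p * (w - w0) + (∫ u in w..β, Φ u) + 1 - β) := by
  have h_init : Φ w = r * (s + p * (w - w0) + 1 - w) := by
    rw [hΦ, sub_self, mul_zero, Real.exp_zero]
    ring
  have h_ode (x : ℝ) : HasDerivAt Φ (r • (Φ x - 1)) x := by
    simpa only [smul_eq_mul, mul_comm (Real.exp _), ← hΦ] using
      hasDerivAt_exp_mul_sub_smul_add r w (r * (s + 1 - p * w0 + w * (p - 1)) - 1) 1 x
  have h_integrated : Φ β - Φ w = r * ((∫ u in w..β, Φ u) - (β - w)) := by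
    simpa only [smul_eq_mul, mul_one] using
      sub_eq_smul_integral_sub_of_hasDerivAt fun x _ ↦ h_ode x
  linear_combination h_integrated + h_init

/-- The exponential threshold function of Ada-PO satisfies constraint [β] of problem O_i
with equality. -/
theorem stmt_8 (r p s w0 w : ℝ) (hr : 0 < r)
    (Φ : ℝ → ℝ)
    (hΦ : ∀ β, Φ β = (r * (s + 1 - p * w0 + w * (p - 1)) - 1) * Real.exp (r * (β - w)) + 1) :
    ∀ β, w ≤ β →
      Φ β = r * (s + p * (w - w0) + (∫ u in w..β, Φ u) + 1 - β) :=
  fun β _ ↦ stmt_8_general r p s w0 w Φ hΦ β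
end
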